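/- arXiv:2509.16299 — 3 statements merged into one kernel-verified Lean document; each statement's English description precedes it below -/
import Mathlib

section
/- Let N : [0,1] → [0,1] be a continuous fuzzy negation and U : [0,1]² → [0,1] a disjunctive uninorm with neutral element e ∈ (0,1). Suppose there exist a continuous fuzzy negation N' and a disjunctive uninorm U' with neutral element e' ∈ (0,1) such that U'(N'(x), y) = U(N(x), y) for all x, y ∈ [0,1] and (N' ≠ N or U' ≠ U). Then there exists α ∈ (0,1) with α ≠ e such that the function s ↦ U(s, α) is continuous and increasing with U(0, α) = 0 and U(1, α) = 1. -/
/-- A uninorm on `[0,1]` with neutral element `e`: commutative, associative,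
increasing in each variable, `U x e = x`, mapping `[0,1]²` into `[0,1]`. -/
def IsUninorm (U : ℝ → ℝ → ℝ) (e : ℝ) : Prop :=
  e ∈ Set.Icc (0:ℝ) 1 ∧
  (∀ x ∈ Set.Icc (0:ℝ) 1, ∀ y ∈ Set.Icc (0:ℝ) 1, U x y ∈ Set.Icc (0:ℝ) 1) ∧
  (∀ x ∈ Set.Icc (0:ℝ) 1, ∀ y ∈ Set.Icc (0:ℝ) 1, U x y = U y x) ∧
  (∀ x ∈ Set.Icc (0:ℝ) 1, ∀ y ∈ Set.Icc (0:ℝ) 1, ∀ z ∈ Set.Icc (0:ℝ) 1,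
    U (U x y) z = U x (U y z)) ∧
  (∀ x ∈ Set.Icc (0:ℝ) 1, ∀ y ∈ Set.Icc (0:ℝ) 1, ∀ z ∈ Set.Icc (0:ℝ) 1,
    y ≤ z → U x y ≤ U x z) ∧
  (∀ x ∈ Set.Icc (0:ℝ) 1, ∀ y ∈ Set.Icc (0:ℝ) 1, ∀ z ∈ Set.Icc (0:ℝ) 1,
    x ≤ y → U x z ≤ U y z) ∧
  (∀ x ∈ Set.Icc (0:ℝ) 1, U x e = x)

/-- A fuzzy negation on `[0,1]`: `N 0 = 1`, `N 1 = 0`, decreasing,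
mapping `[0,1]` into `[0,1]`. -/
def IsFuzzyNegation (N : ℝ → ℝ) : Prop :=
  (∀ x ∈ Set.Icc (0:ℝ) 1, N x ∈ Set.Icc (0:ℝ) 1) ∧
  N 0 = 1 ∧ N 1 = 0 ∧
  (∀ x ∈ Set.Icc (0:ℝ) 1, ∀ y ∈ Set.Icc (0:ℝ) 1, x ≤ y → N y ≤ N x)

/-!
Evaluating `U' (N' x) y = U (N x) y` at `y = e'` gives `N' x = U (N x) e'`, so that `α = e'` is
the natural candidate. The section `s ↦ U s e'` maps the range `[0,1]` of `N` onto the range `[0,1]`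
of `N'`, and an increasing surjection of `[0,1]` onto itself is continuous and fixes `0` and `1`.
If `e'` were `e`, then `N' x = U (N x) e = N x`, and the surjectivity of `N` would give `U' = U`.
-/

open Set

theorem IsFuzzyNegation.image_Icc {N : ℝ → ℝ} (hN : IsFuzzyNegation N)
    (hNc : ContinuousOn N (Icc 0 1)) : N '' Icc 0 1 = Icc 0 1 := by
  obtain ⟨hmaps, hN0, hN1, -⟩ := hN
  refine Subset.antisymm (image_subset_iff.2 hmaps) ?_
  simpa only [hN0, hN1] using intermediate_value_Icc' zero_le_one hNc

theorem continuousOn_of_monotoneOn_of_ordConnected_image {α β : Type*}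
    [LinearOrder α] [TopologicalSpace α] [OrderTopology α]
    [LinearOrder β] [TopologicalSpace β] [OrderTopology β] [DenselyOrdered β]
    {f : α → β} {s : Set α} [s.OrdConnected] (hf : MonotoneOn f s)
    (himage : (f '' s).OrdConnected) : ContinuousOn f s := by
  have hmono : Monotone ((mapsTo_image f s).restrict f s (f '' s)) :=
    fun x y hxy => hf x.2 y.2 hxy
  have hcont := hmono.continuous_of_surjective (surjective_mapsTo_image_restrict f s)
  exact continuousOn_iff_continuous_domRestrict.2 (continuous_subtype_val.comp hcont)

section Representation

variable {X Y L : Type*} {s : Set X} {t : Set Y} {N N' : X → L} {U U' : L → Y → L} {e e' : Y}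

theorem section_rightNeutral_eq (heq : ∀ x ∈ s, ∀ y ∈ t, U' (N' x) y = U (N x) y)
    (he' : e' ∈ t) (hU' : ∀ z ∈ N' '' s, U' z e' = z) : ∀ x ∈ s, U (N x) e' = N' x :=
  fun x hx => (heq x hx e' he').symm.trans (hU' _ (mem_image_of_mem N' hx))

theorem image_section_rightNeutral (heq : ∀ x ∈ s, ∀ y ∈ t, U' (N' x) y = U (N x) y)
    (he' : e' ∈ t) (hU' : ∀ z ∈ N' '' s, U' z e' = z) :
    (fun z => U z e') '' (N '' s) = N' '' s := by
  rw [image_image]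
  exact image_congr (section_rightNeutral_eq heq he' hU')

theorem eqOn_of_common_rightNeutral
    (heq : ∀ x ∈ s, ∀ y ∈ t, U' (N' x) y = U (N x) y) (he : e ∈ t)
    (hU : ∀ z ∈ N '' s, U z e = z) (hU' : ∀ z ∈ N' '' s, U' z e = z) :
    EqOn N' N s ∧ ∀ z ∈ N '' s, ∀ y ∈ t, U' z y = U z y := by
  have hNN : EqOn N' N s := fun x hx =>
    (section_rightNeutral_eq heq he hU' x hx).symm.trans (hU _ (mem_image_of_mem N hx))
  refine ⟨hNN, forall_mem_image.2 fun x hx y hy => ?_⟩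
  rw [← heq x hx y hy, hNN hx]

theorem stmt6_general [LinearOrder L] [TopologicalSpace L] [OrderTopology L] [DenselyOrdered L]
    {a b : L} (hab : a ≤ b) (hN : N '' s = Icc a b) (hN' : N' '' s = Icc a b)
    (hmono : ∀ y ∈ t, MonotoneOn (fun z => U z y) (Icc a b))
    (hU : ∀ z ∈ Icc a b, U z e = z) (he' : e' ∈ t) (hU' : ∀ z ∈ Icc a b, U' z e' = z)
    (heq : ∀ x ∈ s, ∀ y ∈ t, U' (N' x) y = U (N x) y)
    (hdiff : (∃ x ∈ s, N' x ≠ N x) ∨ (∃ z ∈ Icc a b, ∃ y ∈ t, U' z y ≠ U z y)) :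
    e' ≠ e ∧ ContinuousOn (fun z => U z e') (Icc a b) ∧
      MonotoneOn (fun z => U z e') (Icc a b) ∧ U a e' = a ∧ U b e' = b := by
  have himage : (fun z => U z e') '' Icc a b = Icc a b := by
    have h := image_section_rightNeutral heq he' (hN' ▸ hU')
    rwa [hN, hN'] at h
  have hsection := hmono e' he'
  have hleast := hsection.map_isLeast (isLeast_Icc hab)
  have hgreatest := hsection.map_isGreatest (isGreatest_Icc hab)
  rw [himage] at hleast hgreatest
  have hord : ((fun z => U z e') '' Icc a b).OrdConnected := by
    rw [himage]
    exact ordConnected_Icc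
  refine ⟨?_, continuousOn_of_monotoneOn_of_ordConnected_image hsection hord,
    hsection, hleast.unique (isLeast_Icc hab), hgreatest.unique (isGreatest_Icc hab)⟩
  rintro rfl
  obtain ⟨hNN, hUU⟩ := eqOn_of_common_rightNeutral heq he' (hN ▸ hU) (hN' ▸ hU')
  rw [hN] at hUU
  rcases hdiff with ⟨x, hx, hne⟩ | ⟨z, hz, y, hy, hne⟩
  · exact hne (hNN hx)
  · exact hne (hUU z hz y hy)

end Representation

theorem stmt6 (N : ℝ → ℝ) (hN : IsFuzzyNegation N) (hNc : ContinuousOn N (Set.Icc 0 1))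
    (U : ℝ → ℝ → ℝ) (e : ℝ) (he : e ∈ Set.Ioo (0:ℝ) 1)
    (hU : IsUninorm U e) (hd : U 1 0 = 1)
    (N' : ℝ → ℝ) (hN' : IsFuzzyNegation N') (hN'c : ContinuousOn N' (Set.Icc 0 1))
    (U' : ℝ → ℝ → ℝ) (e' : ℝ) (he' : e' ∈ Set.Ioo (0:ℝ) 1)
    (hU' : IsUninorm U' e') (hd' : U' 1 0 = 1)
    (heq : ∀ x ∈ Set.Icc (0:ℝ) 1, ∀ y ∈ Set.Icc (0:ℝ) 1, U' (N' x) y = U (N x) y)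
    (hdiff : (∃ x ∈ Set.Icc (0:ℝ) 1, N' x ≠ N x) ∨
      (∃ x ∈ Set.Icc (0:ℝ) 1, ∃ y ∈ Set.Icc (0:ℝ) 1, U' x y ≠ U x y)) :
    ∃ α ∈ Set.Ioo (0:ℝ) 1, α ≠ e ∧
      ContinuousOn (fun s => U s α) (Set.Icc 0 1) ∧
      MonotoneOn (fun s => U s α) (Set.Icc 0 1) ∧
      U 0 α = 0 ∧ U 1 α = 1 := by
  obtain ⟨-, -, -, -, -, hmono, hUe⟩ := hU
  obtain ⟨-, -, -, -, -, -, hUe'⟩ := hU'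
  exact ⟨e', he', stmt6_general zero_le_one (hN.image_Icc hNc) (hN'.image_Icc hN'c)
    (fun y hy _ hz _ hw hzw => hmono _ hz _ hw y hy hzw) hUe (Ioo_subset_Icc_self he') hUe'
    heq hdiff⟩
end

section
/- Let N : [0,1] → [0,1] be a continuous fuzzy negation, U : [0,1]² → [0,1] a disjunctive uninorm with neutral element e ∈ (0,1), and I(x,y) = U(N(x), y). Suppose N* is a continuous fuzzy negation and U* is a disjunctive uninorm with neutral element α ∈ (0,1) such that I(x,y) = U*(N*(x), y) for all x, y ∈ [0,1]. Then N*(x) = I(x, α) for all x ∈ [0,1], the function s ↦ I(s, α) is a continuous fuzzy negation, and U*(x,y) = I(ℜ_{N*}(x), y) for all x, y ∈ [0,1]. -/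
open Classical in
/-- The modified pseudo-inverse `ℜ_M` of a fuzzy negation `M`:
`ℜ_M 0 = 1` and `ℜ_M x = sup {y ∈ [0,1] | M y > x}` for `x ∈ (0,1]`. -/
noncomputable def pseudoInv (M : ℝ → ℝ) : ℝ → ℝ := fun x =>
  if x = 0 then 1 else sSup {y | y ∈ Set.Icc (0:ℝ) 1 ∧ M y > x}

/-! Evaluating `U N(x) y = U* N*(x) y` at the neutral element `y = α` of `U*` recovers `N*`. Being
continuous, `N*` maps `[0,1]` onto `[0,1]`, and `ℜ_{N*}` selects a preimage of each `x`, so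
substituting `ℜ_{N*} x` into the same identity recovers `U*`. -/

open Set

theorem apply_sSup_setOf_lt_eq {β γ : Type*} [ConditionallyCompleteLinearOrder β]
    [TopologicalSpace β] [OrderTopology β] [DenselyOrdered β] [LinearOrder γ] [TopologicalSpace γ]
    [OrderClosedTopology γ] {f : β → γ} {a b : β} {c : γ} (hab : a ≤ b)
    (hf : ContinuousOn f (Icc a b)) (ha : c < f a) (hb : f b ≤ c) :
    f (sSup {y | y ∈ Icc a b ∧ c < f y}) = c := by
  set S := {y | y ∈ Icc a b ∧ c < f y}
  have hne : S.Nonempty := ⟨a, left_mem_Icc.2 hab, ha⟩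
  have hbdd : BddAbove S := ⟨b, fun y hy => hy.1.2⟩
  have hsub_Ici : S ⊆ Icc a b ∩ f ⁻¹' Ici c := fun y hy => ⟨hy.1, hy.2.le⟩
  have hmem : sSup S ∈ Icc a b ∩ f ⁻¹' Ici c :=
    closure_minimal hsub_Ici
      (hf.preimage_isClosed_of_isClosed isClosed_Icc isClosed_Ici) (csSup_mem_closure hne hbdd)
  refine le_antisymm ?_ hmem.2
  rcases hmem.1.2.eq_or_lt with heq | hlt
  · rwa [heq]
  have hsub_Iic : Ioc (sSup S) b ⊆ Icc a b ∩ f ⁻¹' Iic c := by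
    intro y hy
    have hy' : y ∈ Icc a b := ⟨hmem.1.1.trans hy.1.le, hy.2⟩
    exact ⟨hy', not_lt.1 fun hcy => notMem_of_csSup_lt hy.1 hbdd ⟨hy', hcy⟩⟩
  have hclosure : sSup S ∈ closure (Ioc (sSup S) b) := by
    rw [closure_Ioc hlt.ne]
    exact left_mem_Icc.2 hlt.le
  exact (closure_minimal hsub_Iic
    (hf.preimage_isClosed_of_isClosed isClosed_Icc isClosed_Iic) hclosure).2

theorem pseudoInv_mem_Icc (M : ℝ → ℝ) (x : ℝ) : pseudoInv M x ∈ Icc (0 : ℝ) 1 := by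
  unfold pseudoInv
  split_ifs
  · exact right_mem_Icc.2 zero_le_one
  · exact ⟨Real.sSup_nonneg fun y hy => hy.1.1, Real.sSup_le (fun y hy => hy.1.2) zero_le_one⟩

namespace IsFuzzyNegation

variable {M M' : ℝ → ℝ}

theorem congr (hM : IsFuzzyNegation M) (h : EqOn M' M (Icc 0 1)) : IsFuzzyNegation M' := by
  obtain ⟨hmaps, hzero, hone, hanti⟩ := hM
  refine ⟨fun x hx => ?_, ?_, ?_, fun x hx y hy hxy => ?_⟩
  · rw [h hx]
    exact hmaps x hx
  · rw [h (left_mem_Icc.2 zero_le_one), hzero]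
  · rw [h (right_mem_Icc.2 zero_le_one), hone]
  · rw [h hx, h hy]
    exact hanti x hx y hy hxy

theorem pseudoInv_one (hM : IsFuzzyNegation M) : pseudoInv M 1 = 0 := by
  have hempty : {y | y ∈ Icc (0 : ℝ) 1 ∧ M y > 1} = ∅ :=
    eq_empty_of_forall_notMem fun y hy => (hM.1 y hy.1).2.not_gt hy.2
  -- `sSup ∅ = 0` in `ℝ`, which is also the supremum of `∅` within `[0,1]`.
  rw [pseudoInv, if_neg one_ne_zero, hempty, Real.sSup_empty]

theorem rightInvOn_pseudoInv (hM : IsFuzzyNegation M) (hMc : ContinuousOn M (Icc 0 1)) :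
    RightInvOn (pseudoInv M) M (Icc 0 1) := by
  intro x hx
  have ⟨_, hzero, hone, _⟩ := hM
  rcases eq_or_ne x 0 with rfl | hx0
  · rw [pseudoInv, if_pos rfl, hone]
  rcases hx.2.eq_or_lt with rfl | hx1
  · rw [hM.pseudoInv_one, hzero]
  · rw [pseudoInv, if_neg hx0]
    exact apply_sSup_setOf_lt_eq zero_le_one hMc (hzero ▸ hx1) (hone ▸ hx.1)

end IsFuzzyNegation

theorem IsUninorm.apply_neutral {U : ℝ → ℝ → ℝ} {e x : ℝ} (hU : IsUninorm U e)
    (hx : x ∈ Icc (0 : ℝ) 1) : U x e = x :=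
  hU.2.2.2.2.2.2 x hx

theorem stmt8_general {I Ustar : ℝ → ℝ → ℝ} {Nstar : ℝ → ℝ} {α : ℝ}
    (hN : IsFuzzyNegation Nstar) (hNc : ContinuousOn Nstar (Icc 0 1)) (hα : α ∈ Icc (0 : ℝ) 1)
    (hneutral : ∀ x ∈ Icc (0 : ℝ) 1, Ustar x α = x)
    (hI : ∀ x ∈ Icc (0 : ℝ) 1, ∀ y ∈ Icc (0 : ℝ) 1, I x y = Ustar (Nstar x) y) :
    (∀ x ∈ Icc (0 : ℝ) 1, Nstar x = I x α) ∧
    IsFuzzyNegation (fun s => I s α) ∧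
    ContinuousOn (fun s => I s α) (Icc 0 1) ∧
    (∀ x ∈ Icc (0 : ℝ) 1, ∀ y ∈ Icc (0 : ℝ) 1, Ustar x y = I (pseudoInv Nstar x) y) := by
  have hsection : EqOn (fun s => I s α) Nstar (Icc 0 1) := fun x hx =>
    (hI x hx α hα).trans (hneutral (Nstar x) (hN.1 x hx))
  refine ⟨fun x hx => (hsection hx).symm, hN.congr hsection, hNc.congr hsection,
    fun x hx y hy => ?_⟩
  rw [hI _ (pseudoInv_mem_Icc Nstar x) y hy, hN.rightInvOn_pseudoInv hNc hx]

theorem stmt8 (N : ℝ → ℝ) (hN : IsFuzzyNegation N) (hNc : ContinuousOn N (Set.Icc 0 1))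
    (U : ℝ → ℝ → ℝ) (e : ℝ) (he : e ∈ Set.Ioo (0:ℝ) 1)
    (hU : IsUninorm U e) (hd : U 1 0 = 1)
    (Nstar : ℝ → ℝ) (hNs : IsFuzzyNegation Nstar) (hNsc : ContinuousOn Nstar (Set.Icc 0 1))
    (Ustar : ℝ → ℝ → ℝ) (α : ℝ) (hα : α ∈ Set.Ioo (0:ℝ) 1)
    (hUs : IsUninorm Ustar α) (hds : Ustar 1 0 = 1)
    (heq : ∀ x ∈ Set.Icc (0:ℝ) 1, ∀ y ∈ Set.Icc (0:ℝ) 1, U (N x) y = Ustar (Nstar x) y) :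
    (∀ x ∈ Set.Icc (0:ℝ) 1, Nstar x = U (N x) α) ∧
    IsFuzzyNegation (fun s => U (N s) α) ∧
    ContinuousOn (fun s => U (N s) α) (Set.Icc 0 1) ∧
    (∀ x ∈ Set.Icc (0:ℝ) 1, ∀ y ∈ Set.Icc (0:ℝ) 1,
      Ustar x y = U (N (pseudoInv Nstar x)) y) :=
  stmt8_general (I := fun x => U (N x)) hNs hNsc (Ioo_subset_Icc_self hα)
    (fun _ => hUs.apply_neutral) heq
end

section
/- Let U : [0,1]² → [0,1] be a disjunctive uninorm with neutral element e ∈ (0,1) and let x ∈ (0,1), x < e, be such that s ↦ U(x, s) is continuous with range [0,1]; let y > e satisfy U(x, y) = e. Define f(s) = U(x, s), x_U^(0) = e, x_U^(n) = U(x, x_U^(n−1)) and x_U^(−n) = U(y, x_U^(−n+1)) for n ≥ 1, a_x = lim_{n→∞} x_U^(n) and d_x = lim_{n→∞} x_U^(−n). Then f(a_x) = a_x, f(d_x) = d_x, and U(a_x, d_x) ∈ {a_x, d_x}. -/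
/-!
A uninorm is the multiplication of an ordered commutative monoid on `[0,1]` with unit `e`, and
`U x y = e` says that `x` is invertible with inverse `y`. Multiplication by an invertible element
is an order isomorphism, hence continuous, so it fixes the limits `a` of `x ^ n` and `d` of
`x⁻¹ ^ n`. If, say, `x ≤ 1`, then `a ≤ 1 ≤ d`, so `z = a * d` lies between `a` and `d`. Since `z`
is fixed by `x` and `x⁻¹`, we have `z = x ^ n * z ≤ x ^ n` and so `z ≤ a` when `z ≤ 1`, and dually
`d ≤ z` when `1 ≤ z`.
-/

open Filter Topology

section Monoid

variable {M : Type*} [Monoid M]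

theorem pow_mul_eq_of_mul_eq {v z : M} (hz : v * z = z) (n : ℕ) : v ^ n * z = z := by
  rw [← mul_left_iterate_apply]
  exact Function.iterate_fixed hz n

variable [TopologicalSpace M]

theorem le_of_tendsto_pow_of_mul_eq [Preorder M] [MulLeftMono M] [ClosedIciTopology M]
    {v z a : M} (ha : Tendsto (v ^ ·) atTop (𝓝 a)) (hvz : v * z = z) (hz : z ≤ 1) : z ≤ a :=
  ge_of_tendsto' ha fun n ↦
    calc
      z = v ^ n * z := (pow_mul_eq_of_mul_eq hvz n).symm
      _ ≤ v ^ n := mul_le_of_le_one_right' hz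

theorem ge_of_tendsto_pow_of_mul_eq [Preorder M] [MulLeftMono M] [ClosedIicTopology M]
    {v z a : M} (ha : Tendsto (v ^ ·) atTop (𝓝 a)) (hvz : v * z = z) (hz : 1 ≤ z) : a ≤ z :=
  le_of_tendsto_pow_of_mul_eq (M := Mᵒᵈ) ha hvz hz

variable [PartialOrder M] [MulLeftMono M] [OrderTopology M]

theorem continuous_unit_mul (u : Mˣ) : Continuous ((u : M) * ·) :=
  (u.mulLeft.toOrderIso (fun _ _ h ↦ mul_le_mul_right h _)
    (fun _ _ h ↦ mul_le_mul_right h _)).continuous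

theorem unit_mul_eq_of_tendsto_pow [T2Space M] {u : Mˣ} {a : M}
    (ha : Tendsto ((u : M) ^ ·) atTop (𝓝 a)) : u * a = a := by
  simp only [← mul_left_iterate_apply_one] at ha
  exact isFixedPt_of_tendsto_iterate ha (continuous_unit_mul u).continuousAt

end Monoid

theorem mul_eq_left_or_right_of_tendsto_pow {M : Type*} [CommMonoid M] [LinearOrder M]
    [IsOrderedMonoid M] [TopologicalSpace M] [OrderTopology M] {u : Mˣ} {a d : M}
    (ha : Tendsto ((u : M) ^ ·) atTop (𝓝 a)) (hd : Tendsto ((↑u⁻¹ : M) ^ ·) atTop (𝓝 d)) :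
    a * d = a ∨ a * d = d := by
  wlog hu : u ≤ 1 generalizing u a d
  · rw [mul_comm a d]
    exact (this hd (by rwa [inv_inv]) (inv_le_one'.2 (le_of_not_ge hu))).symm
  have a_le_one : a ≤ 1 := le_of_tendsto' ha (pow_le_one' hu)
  have one_le_d : 1 ≤ d := ge_of_tendsto' hd (one_le_pow_of_one_le' (one_le_inv'.2 hu))
  have u_mul : u * (a * d) = a * d := by rw [← mul_assoc, unit_mul_eq_of_tendsto_pow ha]
  have u_inv_mul : ↑u⁻¹ * (a * d) = a * d := u.inv_mul_eq_iff_eq_mul.2 u_mul.symm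
  rcases le_total (a * d) 1 with h | h
  · exact .inl ((le_of_tendsto_pow_of_mul_eq ha u_mul h).antisymm
      (le_mul_of_one_le_right' one_le_d))
  · exact .inr ((mul_le_of_le_one_left' a_le_one).antisymm
      (ge_of_tendsto_pow_of_mul_eq hd u_inv_mul h))

namespace IsUninorm

variable {U : ℝ → ℝ → ℝ} {e r s t : ℝ}

theorem neutral_mem_Icc (hU : IsUninorm U e) : e ∈ Set.Icc (0 : ℝ) 1 := hU.1

theorem map_mem_Icc (hU : IsUninorm U e) (hr : r ∈ Set.Icc (0 : ℝ) 1)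
    (hs : s ∈ Set.Icc (0 : ℝ) 1) : U r s ∈ Set.Icc (0 : ℝ) 1 :=
  hU.2.1 r hr s hs

protected theorem comm (hU : IsUninorm U e) (hr : r ∈ Set.Icc (0 : ℝ) 1)
    (hs : s ∈ Set.Icc (0 : ℝ) 1) : U r s = U s r :=
  hU.2.2.1 r hr s hs

protected theorem assoc (hU : IsUninorm U e) (hr : r ∈ Set.Icc (0 : ℝ) 1)
    (hs : s ∈ Set.Icc (0 : ℝ) 1) (ht : t ∈ Set.Icc (0 : ℝ) 1) : U (U r s) t = U r (U s t) :=
  hU.2.2.2.1 r hr s hs t ht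

theorem map_le_map_left (hU : IsUninorm U e) (hr : r ∈ Set.Icc (0 : ℝ) 1)
    (hs : s ∈ Set.Icc (0 : ℝ) 1) (ht : t ∈ Set.Icc (0 : ℝ) 1) (hrs : r ≤ s) : U r t ≤ U s t :=
  hU.2.2.2.2.2.1 r hr s hs t ht hrs

theorem map_neutral (hU : IsUninorm U e) (hr : r ∈ Set.Icc (0 : ℝ) 1) : U r e = r :=
  hU.2.2.2.2.2.2 r hr

/-- The interval `[0,1]` with the uninorm `U` as multiplication and `e` as unit. It is a type
synonym because `Set.Icc (0 : ℝ) 1` already carries the multiplication of real numbers. -/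
def Carrier (_ : IsUninorm U e) : Type := Set.Icc (0 : ℝ) 1

variable (hU : IsUninorm U e)

noncomputable instance : LinearOrder hU.Carrier := inferInstanceAs (LinearOrder (Set.Icc (0 : ℝ) 1))

instance : TopologicalSpace hU.Carrier := inferInstanceAs (TopologicalSpace (Set.Icc (0 : ℝ) 1))

instance : OrderTopology hU.Carrier := inferInstanceAs (OrderTopology (Set.Icc (0 : ℝ) 1))

instance : CommMonoid hU.Carrier where
  mul p q := ⟨U p.1 q.1, hU.map_mem_Icc p.2 q.2⟩
  one := ⟨e, hU.neutral_mem_Icc⟩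
  mul_assoc p q r := Subtype.ext (hU.assoc p.2 q.2 r.2)
  mul_comm p q := Subtype.ext (hU.comm p.2 q.2)
  one_mul p := Subtype.ext ((hU.comm hU.neutral_mem_Icc p.2).trans (hU.map_neutral p.2))
  mul_one p := Subtype.ext (hU.map_neutral p.2)

instance : IsOrderedMonoid hU.Carrier where
  mul_le_mul_left p q h r := hU.map_le_map_left p.2 q.2 r.2 h

theorem coe_pow_eq (p : hU.Carrier) {xs : ℕ → ℝ} (hxs0 : xs 0 = e)
    (hxs : ∀ n, xs (n + 1) = U p.1 (xs n)) (n : ℕ) : (p ^ n).1 = xs n := by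
  induction n with
  | zero => exact hxs0.symm
  | succ n ih => rw [pow_succ', hxs, ← ih]; rfl

theorem exists_tendsto_pow (p : hU.Carrier) {xs : ℕ → ℝ} {l : ℝ} (hxs0 : xs 0 = e)
    (hxs : ∀ n, xs (n + 1) = U p.1 (xs n)) (hl : Tendsto xs atTop (𝓝 l)) :
    ∃ a : hU.Carrier, a.1 = l ∧ Tendsto (p ^ ·) atTop (𝓝 a) := by
  obtain rfl : (fun n ↦ (p ^ n).1) = xs := funext (hU.coe_pow_eq p hxs0 hxs)
  exact ⟨⟨l, isClosed_Icc.mem_of_tendsto hl (.of_forall fun n ↦ (p ^ n).2)⟩, rfl,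
    tendsto_subtype_rng.2 hl⟩

/-- The point `x` as an invertible element of `hU.Carrier`, with inverse `y`, so that powers of `x`
and of `y` are powers of one unit and its inverse. -/
def unitOfEq {x y : ℝ} (hx : x ∈ Set.Icc (0 : ℝ) 1) (hy : y ∈ Set.Icc (0 : ℝ) 1)
    (hxy : U x y = e) : hU.Carrierˣ :=
  .mkOfMulEqOne ⟨x, hx⟩ ⟨y, hy⟩ (Subtype.ext hxy)

end IsUninorm

theorem stmt14_general {U : ℝ → ℝ → ℝ} {e x y : ℝ} (hU : IsUninorm U e)
    (hx : x ∈ Set.Icc (0 : ℝ) 1) (hy : y ∈ Set.Icc (0 : ℝ) 1) (hxy : U x y = e)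
    {xs : ℤ → ℝ} (hxs0 : xs 0 = e)
    (hxsp : ∀ n : ℕ, xs ((n : ℤ) + 1) = U x (xs (n : ℤ)))
    (hxsn : ∀ n : ℕ, xs (-(n : ℤ) - 1) = U y (xs (-(n : ℤ))))
    {ax dx : ℝ}
    (ha : Tendsto (fun n : ℕ ↦ xs (n : ℤ)) atTop (𝓝 ax))
    (hd : Tendsto (fun n : ℕ ↦ xs (-(n : ℤ))) atTop (𝓝 dx)) :
    U x ax = ax ∧ U x dx = dx ∧ (U ax dx = ax ∨ U ax dx = dx) := by
  let u : hU.Carrierˣ := hU.unitOfEq hx hy hxy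
  obtain ⟨a, rfl, tendsto_a⟩ := hU.exists_tendsto_pow u.1 hxs0
    (fun n ↦ by exact_mod_cast hxsp n) ha
  obtain ⟨d, rfl, tendsto_d⟩ := hU.exists_tendsto_pow u⁻¹.1 hxs0
    (fun n ↦ by rw [Nat.cast_succ, neg_add']; exact hxsn n) hd
  have hua : u * a = a := unit_mul_eq_of_tendsto_pow tendsto_a
  have hud : u * d = d := (u.inv_mul_eq_iff_eq_mul.1 (unit_mul_eq_of_tendsto_pow tendsto_d)).symm
  have had : a * d = a ∨ a * d = d := mul_eq_left_or_right_of_tendsto_pow tendsto_a tendsto_d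
  exact ⟨congrArg Subtype.val hua, congrArg Subtype.val hud,
    had.imp (congrArg Subtype.val) (congrArg Subtype.val)⟩

theorem stmt14 (U : ℝ → ℝ → ℝ) (e : ℝ) (he : e ∈ Set.Ioo (0:ℝ) 1)
    (hU : IsUninorm U e) (hdisj : U 1 0 = 1)
    (x : ℝ) (hx : x ∈ Set.Ioo (0:ℝ) 1) (hxe : x < e)
    (hcutc : ContinuousOn (fun s => U x s) (Set.Icc 0 1))
    (hcutr : (fun s => U x s) '' Set.Icc 0 1 = Set.Icc 0 1)
    (y : ℝ) (hy : y ∈ Set.Icc (0:ℝ) 1) (hye : e < y) (hxy : U x y = e)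
    (xs : ℤ → ℝ) (hxs0 : xs 0 = e)
    (hxsp : ∀ n : ℕ, xs ((n : ℤ) + 1) = U x (xs (n : ℤ)))
    (hxsn : ∀ n : ℕ, xs (-(n : ℤ) - 1) = U y (xs (-(n : ℤ))))
    (ax dx : ℝ)
    (ha : Filter.Tendsto (fun n : ℕ => xs (n : ℤ)) Filter.atTop (nhds ax))
    (hd : Filter.Tendsto (fun n : ℕ => xs (-(n : ℤ))) Filter.atTop (nhds dx)) :
    U x ax = ax ∧ U x dx = dx ∧ (U ax dx = ax ∨ U ax dx = dx) := by
  exact stmt14_general hU ⟨hx.1.le, hx.2.le⟩ hy hxy hxs0 hxsp hxsn ha hd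
end
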